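/- arXiv:2212.05152 — 2 statements merged into one kernel-verified Lean document; each statement's English description precedes it below -/
import Mathlib

section
/- Let X and Y be compact metric spaces and let T : C(Y) → USC(X) be a backward Kantorovich operator such that T(0)(x) > −∞ for some x ∈ X. Define 𝒯(μ,ν) := sup_{g∈C(Y)} { ∫_Y g dν − ∫_X Tg dμ } for (μ,ν) ∈ P(X) × P(Y). Then 𝒯 is proper (finite at some pair), bounded below, jointly convex, and lower semicontinuous for the weak* topologies, and for every μ ∈ P(X) and g ∈ C(Y) one has sup_{ν∈P(Y)} { ∫_Y g dν − 𝒯(μ,ν) } = ∫_X Tg dμ (values in [−∞,+∞)). -/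
open MeasureTheory Topology Filter Set
open scoped ENNReal NNReal

noncomputable section

/-- The positive part of an extended real number, as an element of `ℝ≥0∞`. -/
def epos (a : EReal) : ℝ≥0∞ := if a = ⊤ then ⊤ else ENNReal.ofReal a.toReal

/-- Signed integral of an `EReal`-valued function (the natural value when `f` is
bounded above or bounded below). -/
def eint {α : Type*} [MeasurableSpace α] (μ : Measure α) (f : α → EReal) : EReal :=
  ((∫⁻ x, epos (f x) ∂μ : ℝ≥0∞) : EReal) - ((∫⁻ x, epos (-(f x)) ∂μ : ℝ≥0∞) : EReal)

/-- The Dirac measure at a point, as a probability measure. -/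
def diracP {α : Type*} [MeasurableSpace α] (x : α) : ProbabilityMeasure α :=
  ⟨Measure.dirac x, inferInstance⟩

/-- Membership in `USC(X)`: upper semicontinuous, bounded above, not identically `⊥`. -/
def IsUSCb {X : Type*} [TopologicalSpace X] (f : X → EReal) : Prop :=
  UpperSemicontinuous f ∧ (∃ M : ℝ, ∀ x, f x ≤ (M : EReal)) ∧ (∃ x, f x ≠ ⊥)

/-- A backward Kantorovich operator `T : C(Y) → USC(X)`: monotone, affine on the
constants, convex, and lower semicontinuous with respect to uniform convergence. -/
def IsBackwardKantorovich {X Y : Type*} [TopologicalSpace X] [TopologicalSpace Y]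
    [CompactSpace Y] (T : C(Y, ℝ) → X → EReal) : Prop :=
  (∀ g, IsUSCb (T g)) ∧
  (∀ g₁ g₂ : C(Y, ℝ), (∀ y, g₁ y ≤ g₂ y) → ∀ x, T g₁ x ≤ T g₂ x) ∧
  (∀ (g : C(Y, ℝ)) (c : ℝ) (x : X),
      T (g + ContinuousMap.const Y c) x = T g x + (c : EReal)) ∧
  (∀ (g₁ g₂ : C(Y, ℝ)) (l : ℝ), 0 ≤ l → l ≤ 1 → ∀ x,
      T (l • g₁ + (1 - l) • g₂) x ≤ (l : EReal) * T g₁ x + ((1 - l : ℝ) : EReal) * T g₂ x) ∧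
  (∀ (g : C(Y, ℝ)) (gn : ℕ → C(Y, ℝ)), Tendsto gn atTop (𝓝 g) →
      ∀ x, T g x ≤ liminf (fun n => T (gn n) x) atTop)

/-! ### The signed integral of functions bounded above -/

section SignedIntegral

variable {α : Type*} [MeasurableSpace α]

theorem epos_eq_toENNReal (a : EReal) : epos a = a.toENNReal := rfl

theorem eint_mono (μ : Measure α) {f₁ f₂ : α → EReal} (h : ∀ x, f₁ x ≤ f₂ x) :
    eint μ f₁ ≤ eint μ f₂ := by
  refine EReal.sub_le_sub ?_ ?_
  · exact EReal.coe_ennreal_le_coe_ennreal_iff.2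
      (lintegral_mono fun x => EReal.toENNReal_le_toENNReal (h x))
  · exact EReal.coe_ennreal_le_coe_ennreal_iff.2
      (lintegral_mono fun x => EReal.toENNReal_le_toENNReal (EReal.neg_le_neg_iff.2 (h x)))

theorem toENNReal_add_toENNReal_coe_sub {M : ℝ} (hM : 0 ≤ M) {a : EReal} (ha : a ≤ M) :
    a.toENNReal + ((M : EReal) - a).toENNReal = ENNReal.ofReal M + (-a).toENNReal := by
  induction a with
  | bot => simp
  | top => simp at ha
  | coe r =>
    have ha : r ≤ M := by exact_mod_cast ha
    rw [← EReal.coe_sub, ← EReal.coe_neg]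
    simp only [EReal.toENNReal_of_ne_top (EReal.coe_ne_top _), EReal.toReal_coe]
    rcases le_total 0 r with hr | hr
    · rw [← ENNReal.ofReal_add hr (by linarith), ENNReal.ofReal_of_nonpos (p := -r) (by linarith)]
      simp
    · rw [← ENNReal.ofReal_add hM (by linarith), ENNReal.ofReal_of_nonpos hr, zero_add]
      congr 1

/-- For `f` bounded above by `M ≥ 0`, the signed integral of `f` is `M` minus the integral of the
nonnegative function `M - f`. -/
theorem eint_eq_coe_sub_lintegral (μ : Measure α) [IsProbabilityMeasure μ] {f : α → EReal}
    (hf : Measurable f) {M : ℝ} (hM : 0 ≤ M) (hfM : ∀ x, f x ≤ M) :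
    eint μ f = (M : EReal) - ((∫⁻ x, ((M : EReal) - f x).toENNReal ∂μ : ℝ≥0∞) : EReal) := by
  have hsum : ∫⁻ x, (f x).toENNReal ∂μ + ∫⁻ x, ((M : EReal) - f x).toENNReal ∂μ
      = ENNReal.ofReal M + ∫⁻ x, (-(f x)).toENNReal ∂μ := by
    rw [← lintegral_add_left hf.ereal_toENNReal]
    simp_rw [toENNReal_add_toENNReal_coe_sub hM (hfM _)]
    rw [lintegral_add_left measurable_const]
    simp
  have hle : ∫⁻ x, (f x).toENNReal ∂μ ≤ ENNReal.ofReal M := by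
    calc ∫⁻ x, (f x).toENNReal ∂μ ≤ ∫⁻ _, ENNReal.ofReal M ∂μ :=
          lintegral_mono fun x => by
            simpa using EReal.toENNReal_le_toENNReal (hfM x)
      _ = ENNReal.ofReal M := by simp
  simp only [eint, epos_eq_toENNReal]
  generalize ∫⁻ x, (f x).toENNReal ∂μ = A at *
  generalize ∫⁻ x, ((M : EReal) - f x).toENNReal ∂μ = D at *
  generalize ∫⁻ x, (-(f x)).toENNReal ∂μ = B at *
  have hA : A ≠ ⊤ := ne_top_of_le_ne_top ENNReal.ofReal_ne_top hle
  lift A to ℝ≥0 using hA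
  lift M to ℝ≥0 using hM
  rw [ENNReal.ofReal_coe_nnreal] at hsum
  induction D with
  | top =>
    have hB : B = ⊤ := by
      by_contra hB
      exact ENNReal.add_ne_top.2 ⟨ENNReal.coe_ne_top, hB⟩ (hsum.symm.trans (by simp))
    simp [hB]
  | coe d =>
    induction B with
    | top => exact absurd hsum (by simp [← ENNReal.coe_add])
    | coe b =>
      have h : (A : ℝ) + d = M + b := by exact_mod_cast hsum
      simp only [EReal.coe_nnreal_eq_coe_real]
      norm_cast
      linarith

theorem eint_le_coe (μ : Measure α) [IsProbabilityMeasure μ] {f : α → EReal}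
    (hf : Measurable f) {M : ℝ} (hM : 0 ≤ M) (hfM : ∀ x, f x ≤ M) : eint μ f ≤ M := by
  rw [eint_eq_coe_sub_lintegral μ hf hM hfM]
  exact EReal.sub_le_of_le_add (le_add_of_nonneg_right (EReal.coe_ennreal_nonneg _))

theorem eint_add_coe (μ : Measure α) [IsProbabilityMeasure μ] {f : α → EReal}
    (hf : Measurable f) {M : ℝ} (hfM : ∀ x, f x ≤ M) (c : ℝ) :
    eint μ (fun x => f x + c) = eint μ f + c := by
  set N : ℝ := |M| + |c|
  have hM : M ≤ N := (le_abs_self M).trans (le_add_of_nonneg_right (abs_nonneg c))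
  have hN : 0 ≤ N := by positivity
  have hNc : 0 ≤ N + c := by have := abs_nonneg M; have := neg_abs_le c; simp only [N]; linarith
  have hfN : ∀ x, f x ≤ N := fun x => (hfM x).trans (by exact_mod_cast hM)
  rw [eint_eq_coe_sub_lintegral μ hf hN hfN,
    eint_eq_coe_sub_lintegral μ (hf.add_const _) hNc
      (fun x => by rw [EReal.coe_add]; exact add_le_add_left (hfN x) _)]
  have h : ∀ a : EReal, ((N + c : ℝ) : EReal) - (a + c) = N - a := fun a => by
    induction a with
    | bot => simp
    | top => simp
    | coe r => norm_cast; ring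
  simp_rw [h]
  rw [EReal.coe_add, sub_eq_add_neg, sub_eq_add_neg, add_right_comm]

theorem toENNReal_convex_le {M l : ℝ} (hl : 0 < l) (hl' : l < 1) {a a₁ a₂ : EReal}
    (h₁ : a₁ ≤ M) (h₂ : a₂ ≤ M) (h : a ≤ l * a₁ + ((1 - l : ℝ) : EReal) * a₂) :
    ENNReal.ofReal l * ((M : EReal) - a₁).toENNReal
      + ENNReal.ofReal (1 - l) * ((M : EReal) - a₂).toENNReal ≤ ((M : EReal) - a).toENNReal := by
  induction a₁ with
  | top => simp at h₁
  | bot =>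
    rw [EReal.coe_mul_bot_of_pos hl, EReal.bot_add, le_bot_iff] at h
    simp [h]
  | coe r₁ =>
    induction a₂ with
    | top => simp at h₂
    | bot =>
      rw [EReal.coe_mul_bot_of_pos (by linarith), EReal.add_bot, le_bot_iff] at h
      simp [h]
    | coe r₂ =>
      induction a with
      | bot => simp
      | top => exact absurd h (by norm_cast)
      | coe r =>
        norm_cast at h h₁ h₂
        simp only [← EReal.coe_sub, EReal.toENNReal_of_ne_top (EReal.coe_ne_top _),
          EReal.toReal_coe]
        rw [← ENNReal.ofReal_mul hl.le, ← ENNReal.ofReal_mul (by linarith),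
          ← ENNReal.ofReal_add (mul_nonneg hl.le (by linarith))
            (mul_nonneg (by linarith) (by linarith))]
        exact ENNReal.ofReal_le_ofReal (by linarith)

theorem eint_convex_le (μ : Measure α) [IsProbabilityMeasure μ] {f f₁ f₂ : α → EReal}
    (hf : Measurable f) (hf₁ : Measurable f₁) (hf₂ : Measurable f₂) {M₁ M₂ l : ℝ}
    (h₁ : ∀ x, f₁ x ≤ M₁) (h₂ : ∀ x, f₂ x ≤ M₂) (hl : 0 < l) (hl' : l < 1)
    (h : ∀ x, f x ≤ l * f₁ x + ((1 - l : ℝ) : EReal) * f₂ x)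
    {a₁ a₂ : ℝ} (ha₁ : eint μ f₁ = a₁) (ha₂ : eint μ f₂ = a₂) :
    eint μ f ≤ ((l * a₁ + (1 - l) * a₂ : ℝ) : EReal) := by
  set M : ℝ := max 0 (max M₁ M₂)
  have hM : 0 ≤ M := le_max_left _ _
  have h₁M : ∀ x, f₁ x ≤ M := fun x => (h₁ x).trans (by
    exact_mod_cast (le_max_left M₁ M₂).trans (le_max_right _ _))
  have h₂M : ∀ x, f₂ x ≤ M := fun x => (h₂ x).trans (by
    exact_mod_cast (le_max_right M₁ M₂).trans (le_max_right _ _))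
  have hfM : ∀ x, f x ≤ M := fun x => by
    refine (h x).trans ?_
    calc (l : EReal) * f₁ x + ((1 - l : ℝ) : EReal) * f₂ x
        ≤ (l : EReal) * M + ((1 - l : ℝ) : EReal) * M :=
          add_le_add (mul_le_mul_of_nonneg_left (h₁M x) (by exact_mod_cast hl.le))
            (mul_le_mul_of_nonneg_left (h₂M x) (by exact_mod_cast (by linarith : 0 ≤ 1 - l)))
      _ = M := by norm_cast; ring
  have hD := lintegral_mono (μ := μ) fun x => toENNReal_convex_le hl hl' (h₁M x) (h₂M x) (h x)
  have hm : ∀ {u : α → EReal}, Measurable u →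
      Measurable fun x => ((M : EReal) - u x).toENNReal := fun hu =>
    (measurable_const.sub hu).ereal_toENNReal
  rw [lintegral_add_left ((hm hf₁).const_mul _), lintegral_const_mul _ (hm hf₁),
    lintegral_const_mul _ (hm hf₂)] at hD
  rw [eint_eq_coe_sub_lintegral μ hf₁ hM h₁M] at ha₁
  rw [eint_eq_coe_sub_lintegral μ hf₂ hM h₂M] at ha₂
  rw [eint_eq_coe_sub_lintegral μ hf hM hfM]
  generalize ∫⁻ x, ((M : EReal) - f x).toENNReal ∂μ = D at *
  generalize ∫⁻ x, ((M : EReal) - f₁ x).toENNReal ∂μ = D₁ at *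
  generalize ∫⁻ x, ((M : EReal) - f₂ x).toENNReal ∂μ = D₂ at *
  induction D₁ with
  | top => simp at ha₁
  | coe d₁ =>
  induction D₂ with
  | top => simp at ha₂
  | coe d₂ =>
  induction D with
  | top => simp
  | coe d =>
  have hd : l * d₁ + (1 - l) * d₂ ≤ d := by
    have := ENNReal.toReal_mono ENNReal.coe_ne_top hD
    rwa [ENNReal.toReal_add (by finiteness) (by finiteness), ENNReal.toReal_mul,
      ENNReal.toReal_mul, ENNReal.toReal_ofReal hl.le, ENNReal.toReal_ofReal (by linarith)] at this
  simp only [EReal.coe_nnreal_eq_coe_real] at *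
  norm_cast at *
  subst ha₁ ha₂
  linarith

end SignedIntegral

/-! ### Semicontinuity of integrals in the measure -/

theorem lowerSemicontinuous_lintegral_ofReal {X : Type*} [MetricSpace X] [CompactSpace X]
    [MeasurableSpace X] [BorelSpace X] {f : X → ℝ} (hf : LowerSemicontinuous f) (hf0 : 0 ≤ f) :
    LowerSemicontinuous
      fun μ : ProbabilityMeasure X => ∫⁻ x, ENNReal.ofReal (f x) ∂(μ : Measure X) := by
  let := TopologicalSpace.pseudoMetrizableSpacePseudoMetric (ProbabilityMeasure X)
  rw [lowerSemicontinuous_iff_le_liminf]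
  intro μ
  simp_rw [lintegral_eq_lintegral_meas_lt _ (Eventually.of_forall hf0) hf.measurable.aemeasurable]
  refine (lintegral_mono fun t => ?_).trans (lintegral_liminf_le fun ν : ProbabilityMeasure X =>
    Antitone.measurable fun s t hst => measure_mono fun x hx => lt_of_le_of_lt hst hx)
  exact ProbabilityMeasure.le_liminf_measure_open_of_tendsto tendsto_id (hf.isOpen_preimage t)

theorem lowerSemicontinuous_lintegral {X : Type*} [MetricSpace X] [CompactSpace X]
    [MeasurableSpace X] [BorelSpace X] {f : X → ℝ≥0∞} (hf : LowerSemicontinuous f) :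
    LowerSemicontinuous fun μ : ProbabilityMeasure X => ∫⁻ x, f x ∂(μ : Measure X) := by
  have hfin : ∀ (n : ℕ) (x : X), min (f x) (n : ℝ≥0∞) ≠ ⊤ := fun n x =>
    ne_top_of_le_ne_top (ENNReal.natCast_ne_top n) (min_le_right _ _)
  have htrunc : ∀ n : ℕ, LowerSemicontinuous fun x => (min (f x) n).toReal := fun n x c hc => by
    rcases lt_or_ge c 0 with hc0 | hc0
    · exact Eventually.of_forall fun _ => hc0.trans_le ENNReal.toReal_nonneg
    have hc' : ENNReal.ofReal c < min (f x) n :=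
      (ENNReal.ofReal_lt_iff_lt_toReal hc0 (hfin n x)).2 hc
    filter_upwards [hf x _ (lt_min_iff.1 hc').1] with y hy
    exact (ENNReal.ofReal_lt_iff_lt_toReal hc0 (hfin n y)).1
      (lt_min hy (lt_min_iff.1 hc').2)
  have hsup : ∀ x, f x = ⨆ n : ℕ, ENNReal.ofReal (min (f x) n).toReal := fun x => by
    have : ∀ n : ℕ, ENNReal.ofReal (min (f x) n).toReal = f x ⊓ n := fun n =>
      ENNReal.ofReal_toReal (hfin n x)
    simp_rw [this]
    rw [← inf_iSup_eq, ENNReal.iSup_natCast, inf_top_eq]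
  have hint : ∀ μ : ProbabilityMeasure X, ∫⁻ x, f x ∂(μ : Measure X)
      = ⨆ n : ℕ, ∫⁻ x, ENNReal.ofReal (min (f x) n).toReal ∂(μ : Measure X) := fun μ => by
    rw [← lintegral_iSup (fun n => (htrunc n).measurable.ennreal_ofReal)]
    · exact lintegral_congr hsup
    · intro m n hmn x
      refine ENNReal.ofReal_le_ofReal (ENNReal.toReal_mono (hfin n x) ?_)
      exact min_le_min_left _ (by exact_mod_cast hmn)
  simp_rw [hint]
  exact lowerSemicontinuous_iSup fun n =>
    lowerSemicontinuous_lintegral_ofReal (htrunc n) fun _ => ENNReal.toReal_nonneg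

theorem lowerSemicontinuous_toENNReal_coe_sub {X : Type*} [TopologicalSpace X] {f : X → EReal}
    (hf : UpperSemicontinuous f) (M : ℝ) :
    LowerSemicontinuous fun x => ((M : EReal) - f x).toENNReal := by
  have hc : Continuous fun a : EReal => ((M : EReal) - a).toENNReal := by
    refine EReal.continuous_toENNReal.comp ?_
    refine continuous_iff_continuousAt.2 fun a => ?_
    have hadd := EReal.continuousAt_add (p := ((M : EReal), -a)) (Or.inl (EReal.coe_ne_top M))
      (Or.inl (EReal.coe_ne_bot M))
    exact ContinuousAt.comp (f := fun b : EReal => ((M : EReal), -b)) hadd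
      (continuousAt_const.prodMk continuous_neg.continuousAt)
  exact hc.comp_upperSemicontinuous_antitone hf fun a b hab =>
    EReal.toENNReal_le_toENNReal (EReal.sub_le_sub le_rfl hab)

/-! ### Affine minorants given by probability measures -/

theorem exists_probabilityMeasure_integral_eq {Y : Type*} [MetricSpace Y] [CompactSpace Y]
    [MeasurableSpace Y] [BorelSpace Y] (L : C(Y, ℝ) →ₗ[ℝ] ℝ)
    (hL : ∀ g : C(Y, ℝ), 0 ≤ g → 0 ≤ L g) (hL1 : L 1 = 1) :
    ∃ ν : ProbabilityMeasure Y, ∀ g : C(Y, ℝ), ∫ y, g y ∂(ν : Measure Y) = L g := by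
  let Λ₀ : CompactlySupportedContinuousMap Y ℝ →ₗ[ℝ] ℝ :=
    { toFun := fun g => L g.toContinuousMap
      map_add' := fun f g => L.map_add f.toContinuousMap g.toContinuousMap
      map_smul' := fun c f => L.map_smul c f.toContinuousMap }
  let Λ : CompactlySupportedContinuousMap Y ℝ →ₚ[ℝ] ℝ :=
    PositiveLinearMap.mk₀ Λ₀ fun g hg => hL g.toContinuousMap hg
  have hint : ∀ g : C(Y, ℝ), ∫ y, g y ∂(RealRMK.rieszMeasure Λ) = L g := fun g =>
    RealRMK.integral_rieszMeasure Λ (CompactlySupportedContinuousMap.continuousMapEquiv g)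
  have hprob : IsProbabilityMeasure (RealRMK.rieszMeasure Λ) := by
    have h1 := hint 1
    simp only [ContinuousMap.one_apply, integral_const, smul_eq_mul, mul_one, hL1,
      Measure.real, ENNReal.toReal_eq_one_iff] at h1
    exact ⟨h1⟩
  exact ⟨⟨_, hprob⟩, hint⟩

theorem ContinuousMap.le_add_const_norm_sub {Y : Type*} [TopologicalSpace Y] [CompactSpace Y]
    (g h : C(Y, ℝ)) (y : Y) : g y ≤ (h + ContinuousMap.const Y ‖g - h‖) y := by
  have := (le_abs_self _).trans ((g - h).norm_coe_le_norm y)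
  simp only [ContinuousMap.sub_apply, ContinuousMap.add_apply, ContinuousMap.const_apply] at *
  linarith

theorem ConvexOn.exists_probabilityMeasure_affine_le {Y : Type*} [MetricSpace Y] [CompactSpace Y]
    [MeasurableSpace Y] [BorelSpace Y] {Φ : C(Y, ℝ) → ℝ} (hconv : ConvexOn ℝ univ Φ)
    (hmono : ∀ g h : C(Y, ℝ), (∀ y, g y ≤ h y) → Φ g ≤ Φ h)
    (hconst : ∀ (g : C(Y, ℝ)) (c : ℝ), Φ (g + ContinuousMap.const Y c) = Φ g + c)
    {g : C(Y, ℝ)} {a : ℝ} (ha : a < Φ g) :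
    ∃ (ν : ProbabilityMeasure Y) (c : ℝ),
      (∀ h : C(Y, ℝ), ∫ y, h y ∂(ν : Measure Y) + c ≤ Φ h) ∧
        ∫ y, g y ∂(ν : Measure Y) + c = a := by
  have hlip : LipschitzWith 1 Φ := LipschitzWith.of_le_add fun g h => by
    rw [dist_eq_norm, ← hconst]
    exact hmono _ _ (ContinuousMap.le_add_const_norm_sub g h)
  obtain ⟨L, c, hle, heq⟩ := hconv.exists_affine_le_of_lt (𝕜 := ℝ) (mem_univ g) ha isClosed_univ
    (hlip.continuous.lowerSemicontinuous.lowerSemicontinuousOn _)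
  have hle' : ∀ h, L h + c ≤ Φ h := fun h => hle ⟨h, mem_univ h⟩
  have hpos : ∀ h : C(Y, ℝ), 0 ≤ h → 0 ≤ L h := fun h hh => by
    by_contra! hneg
    obtain ⟨n, hn⟩ := exists_nat_gt ((Φ 0 - c) / (-L h))
    rw [div_lt_iff₀ (by linarith)] at hn
    have h1 := hle' (-((n : ℝ) • h))
    have h2 := hmono (-((n : ℝ) • h)) 0 fun y => by
      have : 0 ≤ (n : ℝ) * h y := mul_nonneg n.cast_nonneg (hh y)
      simpa using this
    rw [map_neg, map_smul, smul_eq_mul] at h1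
    linarith
  have hone : L 1 = 1 := by
    have key : ∀ t : ℝ, t * L 1 + c ≤ Φ 0 + t := fun t => by
      have h1 := hle' (0 + ContinuousMap.const Y t)
      rw [hconst] at h1
      have h2 : (0 + ContinuousMap.const Y t : C(Y, ℝ)) = t • 1 := by ext; simp
      rwa [h2, map_smul, smul_eq_mul] at h1
    by_contra hne
    have hne' : L 1 - 1 ≠ 0 := sub_ne_zero.2 hne
    have := key ((Φ 0 - c + 1) / (L 1 - 1))
    have h3 : (Φ 0 - c + 1) / (L 1 - 1) * (L 1 - 1) = Φ 0 - c + 1 := div_mul_cancel₀ _ hne'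
    linarith
  obtain ⟨ν, hν⟩ := exists_probabilityMeasure_integral_eq L.toLinearMap hpos hone
  refine ⟨ν, c, fun h => ?_, ?_⟩
  · rw [hν]; exact hle' h
  · rw [hν]; exact heq

/-! ### Backward Kantorovich operators -/

theorem IsUSCb.exists_nonneg_bound {X : Type*} [TopologicalSpace X] {f : X → EReal}
    (hf : IsUSCb f) :
    ∃ M : ℝ, 0 ≤ M ∧ ∀ x, f x ≤ M := by
  obtain ⟨M, hM⟩ := hf.2.1
  exact ⟨max M 0, le_max_right _ _, fun x => (hM x).trans (by exact_mod_cast le_max_left M 0)⟩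

section BackwardKantorovich

variable {X Y : Type*} [MetricSpace X] [MeasurableSpace X] [BorelSpace X]
  [MetricSpace Y] [CompactSpace Y]

theorem IsBackwardKantorovich.eint_add_const {T : C(Y, ℝ) → X → EReal}
    (hT : IsBackwardKantorovich T) (μ : ProbabilityMeasure X) (g : C(Y, ℝ)) (c : ℝ) :
    eint (μ : Measure X) (T (g + ContinuousMap.const Y c)) = eint (μ : Measure X) (T g) + c := by
  obtain ⟨M, -, hM⟩ := (hT.1 g).exists_nonneg_bound
  rw [← eint_add_coe _ (hT.1 g).1.measurable hM]
  congr 1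
  exact funext fun x => hT.2.2.1 g c x

/-- Writing `Tg = M - (M - Tg)` turns each term of the supremum into a sum with a nonnegative
integral. -/
theorem IsBackwardKantorovich.exists_coe_sub_eint_eq {T : C(Y, ℝ) → X → EReal}
    (hT : IsBackwardKantorovich T) (g : C(Y, ℝ)) :
    ∃ (M : ℝ) (F : X → ℝ≥0∞), LowerSemicontinuous F ∧
      ∀ (μ : ProbabilityMeasure X) (r : ℝ), (r : EReal) - eint (μ : Measure X) (T g)
        = ((r - M : ℝ) : EReal) + ((∫⁻ x, F x ∂(μ : Measure X) : ℝ≥0∞) : EReal) := by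
  obtain ⟨M, hM0, hM⟩ := (hT.1 g).exists_nonneg_bound
  refine ⟨M, _, lowerSemicontinuous_toENNReal_coe_sub (hT.1 g).1 M, fun μ r => ?_⟩
  rw [eint_eq_coe_sub_lintegral _ (hT.1 g).1.measurable hM0 hM]
  generalize ∫⁻ x, ((M : EReal) - T g x).toENNReal ∂(μ : Measure X) = D
  induction D with
  | top => rw [EReal.coe_ennreal_top, EReal.sub_top, EReal.coe_sub_bot, EReal.coe_add_top]
  | coe d =>
    simp only [EReal.coe_nnreal_eq_coe_real]
    norm_cast
    ring

variable [MeasurableSpace Y] [BorelSpace Y]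

theorem IsBackwardKantorovich.exists_affine_le {T : C(Y, ℝ) → X → EReal}
    (hT : IsBackwardKantorovich T) (μ : ProbabilityMeasure X) {g : C(Y, ℝ)} {a : ℝ}
    (ha : (a : EReal) < eint (μ : Measure X) (T g)) :
    ∃ ν : ProbabilityMeasure Y, ∀ h : C(Y, ℝ),
      ((∫ y, h y ∂(ν : Measure Y) : ℝ) : EReal) - eint (μ : Measure X) (T h)
        ≤ ((∫ y, g y ∂(ν : Measure Y) - a : ℝ) : EReal) := by
  have hreal : ∀ h, ∃ r : ℝ, eint (μ : Measure X) (T h) = r := fun h => by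
    obtain ⟨M, hM0, hM⟩ := (hT.1 h).exists_nonneg_bound
    have htop : eint (μ : Measure X) (T h) ≠ ⊤ := ne_top_of_le_ne_top (EReal.coe_ne_top M)
      (eint_le_coe _ (hT.1 h).1.measurable hM0 hM)
    have hbot : eint (μ : Measure X) (T h) ≠ ⊥ := fun hbot => by
      have hle := eint_mono (μ : Measure X)
        (hT.2.1 _ _ (ContinuousMap.le_add_const_norm_sub g h))
      rw [hT.eint_add_const, hbot, EReal.bot_add] at hle
      exact not_lt_bot (ha.trans_le hle)
    exact ⟨_, (EReal.coe_toReal htop hbot).symm⟩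
  choose Φ hΦ using hreal
  have hmono : ∀ g h : C(Y, ℝ), (∀ y, g y ≤ h y) → Φ g ≤ Φ h := fun g h hgh => by
    have := eint_mono (μ : Measure X) (hT.2.1 g h hgh)
    rw [hΦ, hΦ] at this
    exact_mod_cast this
  have hconst : ∀ (g : C(Y, ℝ)) (c : ℝ), Φ (g + ContinuousMap.const Y c) = Φ g + c :=
    fun g c => by
      have := hT.eint_add_const μ g c
      rw [hΦ, hΦ] at this
      exact_mod_cast this
  have hconv : ConvexOn ℝ univ Φ := by
    refine convexOn_iff_forall_pos.2 ⟨convex_univ, fun g _ h _ l m hl hm hlm => ?_⟩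
    obtain rfl : m = 1 - l := by linarith
    obtain ⟨M₁, -, hM₁⟩ := (hT.1 g).exists_nonneg_bound
    obtain ⟨M₂, -, hM₂⟩ := (hT.1 h).exists_nonneg_bound
    have := eint_convex_le (μ : Measure X) (hT.1 (l • g + (1 - l) • h)).1.measurable
      (hT.1 g).1.measurable (hT.1 h).1.measurable hM₁ hM₂ hl (by linarith)
      (hT.2.2.2.1 g h l hl.le (by linarith)) (hΦ g) (hΦ h)
    rw [hΦ] at this
    exact_mod_cast this
  rw [hΦ] at ha
  obtain ⟨ν, c, hle, heq⟩ :=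
    hconv.exists_probabilityMeasure_affine_le hmono hconst (EReal.coe_lt_coe_iff.1 ha)
  refine ⟨ν, fun h => ?_⟩
  rw [hΦ]
  have := hle h
  norm_cast
  linarith

end BackwardKantorovich

/-- From a backward Kantorovich operator `T` one builds a backward linear transfer
`𝒯(μ,ν) = sup_g { ∫ g dν − ∫ Tg dμ }`: it is proper, bounded below, jointly convex,
weak*-lower semicontinuous, and `T` realises the Legendre transform of `𝒯(μ,·)`. -/
theorem backwardKantorovich_gives_backwardLinearTransfer
    {X Y : Type*} [MetricSpace X] [CompactSpace X] [MeasurableSpace X] [BorelSpace X]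
    [MetricSpace Y] [CompactSpace Y] [MeasurableSpace Y] [BorelSpace Y]
    (T : C(Y, ℝ) → X → EReal) (hT : IsBackwardKantorovich T)
    (𝒯 : ProbabilityMeasure X → ProbabilityMeasure Y → EReal)
    (h𝒯 : ∀ μ ν, 𝒯 μ ν = ⨆ g : C(Y, ℝ),
        (((∫ y, g y ∂(ν : Measure Y)) : ℝ) : EReal) - eint (μ : Measure X) (T g)) :
    (∃ μ ν, 𝒯 μ ν ≠ ⊤ ∧ 𝒯 μ ν ≠ ⊥) ∧
    (∃ m : ℝ, ∀ μ ν, (m : EReal) ≤ 𝒯 μ ν) ∧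
    (∀ (μ₁ μ₂ : ProbabilityMeasure X) (ν₁ ν₂ : ProbabilityMeasure Y)
        (μ : ProbabilityMeasure X) (ν : ProbabilityMeasure Y) (a b : ℝ≥0),
        a + b = 1 →
        (μ : Measure X) = a • (μ₁ : Measure X) + b • (μ₂ : Measure X) →
        (ν : Measure Y) = a • (ν₁ : Measure Y) + b • (ν₂ : Measure Y) →
        𝒯 μ ν ≤ ((a : ℝ) : EReal) * 𝒯 μ₁ ν₁ + ((b : ℝ) : EReal) * 𝒯 μ₂ ν₂) ∧
    LowerSemicontinuous (fun p : ProbabilityMeasure X × ProbabilityMeasure Y => 𝒯 p.1 p.2) ∧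
    (∀ (μ : ProbabilityMeasure X) (g : C(Y, ℝ)),
        (⨆ ν : ProbabilityMeasure Y,
          (((∫ y, g y ∂(ν : Measure Y)) : ℝ) : EReal) - 𝒯 μ ν) = eint (μ : Measure X) (T g)) := by
  have hterm : ∀ (μ : ProbabilityMeasure X) (ν : ProbabilityMeasure Y) (g : C(Y, ℝ)),
      (((∫ y, g y ∂(ν : Measure Y)) : ℝ) : EReal) - eint (μ : Measure X) (T g)
      ≤ 𝒯 μ ν := fun μ ν g => by
    rw [h𝒯]
    exact le_iSup (fun g : C(Y, ℝ) =>
      (((∫ y, g y ∂(ν : Measure Y)) : ℝ) : EReal) - eint (μ : Measure X) (T g)) g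
  have hbdd : ∃ m : ℝ, ∀ μ ν, (m : EReal) ≤ 𝒯 μ ν := by
    obtain ⟨M, hM0, hM⟩ := (hT.1 0).exists_nonneg_bound
    refine ⟨0 - M, fun μ ν => le_trans ?_ (hterm μ ν 0)⟩
    rw [EReal.coe_sub]
    exact EReal.sub_le_sub (by simp) (eint_le_coe _ (hT.1 0).1.measurable hM0 hM)
  refine ⟨?_, hbdd, ?_, ?_, ?_⟩
  · obtain ⟨x, hx⟩ := (hT.1 0).2.2
    obtain ⟨M, hM0, hM⟩ := (hT.1 0).exists_nonneg_bound
    have hne : eint (diracP x : Measure X) (T 0) ≠ ⊥ := by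
      rw [eint_eq_coe_sub_lintegral _ (hT.1 0).1.measurable hM0 hM]
      change (M : EReal) - ((∫⁻ z, _ ∂(Measure.dirac x) : ℝ≥0∞) : EReal) ≠ ⊥
      rw [lintegral_dirac]
      lift T 0 x to ℝ using ⟨ne_top_of_le_ne_top (EReal.coe_ne_top M) (hM x), hx⟩ with r
      rw [← EReal.coe_sub, EReal.toENNReal_of_ne_top (EReal.coe_ne_top _), EReal.toReal_coe,
        EReal.coe_ennreal_ofReal, ← EReal.coe_sub]
      exact EReal.coe_ne_bot _
    obtain ⟨a, -, ha⟩ := EReal.lt_iff_exists_real_btwn.1 (bot_lt_iff_ne_bot.2 hne)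
    obtain ⟨ν, hν⟩ := hT.exists_affine_le (diracP x) ha
    refine ⟨diracP x, ν, ?_, ?_⟩
    · rw [h𝒯]
      exact ne_top_of_le_ne_top (EReal.coe_ne_top _) (iSup_le hν)
    · obtain ⟨m, hm⟩ := hbdd
      exact ne_bot_of_le_ne_bot (EReal.coe_ne_bot m) (hm _ _)
  · intro μ₁ μ₂ ν₁ ν₂ μ ν a b hab hμ hν
    rw [h𝒯 μ ν]
    refine iSup_le fun g => ?_
    have ha0 : (0 : EReal) ≤ ((a : ℝ) : EReal) := by exact_mod_cast a.2
    have hb0 : (0 : EReal) ≤ ((b : ℝ) : EReal) := by exact_mod_cast b.2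
    refine le_trans (le_of_eq ?_) (add_le_add (mul_le_mul_of_nonneg_left (hterm μ₁ ν₁ g) ha0)
      (mul_le_mul_of_nonneg_left (hterm μ₂ ν₂ g) hb0))
    obtain ⟨M, F, -, hF⟩ := hT.exists_coe_sub_eint_eq g
    have hgi : ∀ ν : ProbabilityMeasure Y, Integrable g (ν : Measure Y) := fun ν =>
      g.continuous.integrable_of_hasCompactSupport (HasCompactSupport.of_compactSpace g)
    have hg : ∫ y, g y ∂(ν : Measure Y)
        = a * ∫ y, g y ∂(ν₁ : Measure Y) + b * ∫ y, g y ∂(ν₂ : Measure Y) := by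
      rw [hν, integral_add_measure ((hgi ν₁).smul_measure_nnreal)
        ((hgi ν₂).smul_measure_nnreal), integral_smul_nnreal_measure,
        integral_smul_nnreal_measure]
      rfl
    have hD : ∫⁻ x, F x ∂(μ : Measure X)
        = a * ∫⁻ x, F x ∂(μ₁ : Measure X) + b * ∫⁻ x, F x ∂(μ₂ : Measure X) := by
      rw [hμ, lintegral_add_measure, lintegral_smul_measure, lintegral_smul_measure]
      rfl
    have hab' : (a : ℝ) + b = 1 := by exact_mod_cast hab
    rw [hF, hF, hF, hg, hD, EReal.left_distrib_of_nonneg_of_ne_top ha0 (EReal.coe_ne_top _),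
      EReal.left_distrib_of_nonneg_of_ne_top hb0 (EReal.coe_ne_top _), add_add_add_comm,
      EReal.coe_ennreal_add, EReal.coe_ennreal_mul, EReal.coe_ennreal_mul]
    congr 1
    norm_cast
    linear_combination M * hab'
  · simp_rw [h𝒯]
    refine lowerSemicontinuous_iSup fun g => ?_
    obtain ⟨M, F, hFc, hF⟩ := hT.exists_coe_sub_eint_eq g
    simp_rw [hF]
    have hg : Continuous fun p : ProbabilityMeasure X × ProbabilityMeasure Y =>
        ((∫ y, g y ∂(p.2 : Measure Y) - M : ℝ) : EReal) := by
      refine continuous_coe_real_ereal.comp (Continuous.sub ?_ continuous_const)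
      exact (ProbabilityMeasure.continuous_integral_boundedContinuousFunction
        (BoundedContinuousFunction.mkOfCompact g)).comp continuous_snd
    refine LowerSemicontinuous.add' hg.lowerSemicontinuous ?_ fun p => ?_
    · exact continuous_coe_ennreal_ereal.comp_lowerSemicontinuous
        ((lowerSemicontinuous_lintegral hFc).comp continuous_fst)
        EReal.coe_ennreal_strictMono.monotone
    · exact EReal.continuousAt_add (Or.inl (EReal.coe_ne_top _)) (Or.inl (EReal.coe_ne_bot _))
  · intro μ g
    refine le_antisymm (iSup_le fun ν => ?_) (le_of_forall_lt fun b hb => ?_)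
    · refine (EReal.sub_le_sub le_rfl (hterm μ ν g)).trans ?_
      induction eint (μ : Measure X) (T g) with
      | bot => simp
      | top => exact le_top
      | coe r => norm_cast; simp
    · obtain ⟨a, hba, ha⟩ := EReal.lt_iff_exists_real_btwn.1 hb
      obtain ⟨ν, hν⟩ := hT.exists_affine_le μ ha
      refine hba.trans_le (le_trans ?_ (le_iSup _ ν))
      rw [h𝒯]
      refine le_trans (le_of_eq ?_) (EReal.sub_le_sub le_rfl (iSup_le hν))
      norm_cast
      ring
end
end

section
/- Let X and Y be compact metric spaces and let S be a nonempty convex weak*-compact subset of P(X) × P(Y) that is a gambling house (for every x ∈ X there is σ with (δ_x,σ) ∈ S) and satisfies the fiber property: (μ,ν) ∈ S if and only if there exists a coupling π of μ and ν whose disintegration (π_x)_{x∈X} with respect to μ satisfies (δ_x, π_x) ∈ S for μ-almost every x. Then for every μ ∈ P(X) and every g ∈ C(Y): sup{ ∫_Y g dν : ν ∈ P(Y), (μ,ν) ∈ S } = ∫_X T g dμ, where Tg(x) := sup{ ∫_Y g dσ : (δ_x,σ) ∈ S }; in particular for every μ ∈ P(X) there exists ν ∈ P(Y) with (μ,ν)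 ∈ S. -/
open MeasureTheory Topology Filter Set
open scoped ENNReal NNReal

noncomputable section

/-- Convexity of a set of pairs of probability measures, via convex combinations
of the underlying measures. -/
def PConvex {X Y : Type*} [MeasurableSpace X] [MeasurableSpace Y]
    (C : Set (ProbabilityMeasure X × ProbabilityMeasure Y)) : Prop :=
  ∀ p ∈ C, ∀ q ∈ C, ∀ a b : ℝ≥0, a + b = 1 →
    ∀ (μ : ProbabilityMeasure X) (ν : ProbabilityMeasure Y),
      (μ : Measure X) = a • (p.1 : Measure X) + b • (q.1 : Measure X) →
      (ν : Measure Y) = a • (p.2 : Measure Y) + b • (q.2 : Measure Y) →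
      (μ, ν) ∈ C

/-- A gambling house: every Dirac measure has at least one target in `S`. -/
def IsGamblingHouse {X Y : Type*} [MeasurableSpace X] [MeasurableSpace Y]
    (S : Set (ProbabilityMeasure X × ProbabilityMeasure Y)) : Prop :=
  ∀ x : X, ∃ σ : ProbabilityMeasure Y, (diracP x, σ) ∈ S

/-- The (positively 1-homogeneous) Kantorovich operator of a gambling house:
`Tg(x) = sup { ∫ g dσ : (δ_x, σ) ∈ S }`. -/
def houseOp {X Y : Type*} [MeasurableSpace X] [TopologicalSpace Y] [MeasurableSpace Y]
    (S : Set (ProbabilityMeasure X × ProbabilityMeasure Y)) (g : C(Y, ℝ)) (x : X) : EReal :=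
  ⨆ σ ∈ {σ : ProbabilityMeasure Y | (diracP x, σ) ∈ S},
    (((∫ y, g y ∂(σ : Measure Y)) : ℝ) : EReal)

open ProbabilityTheory in
theorem integral_comp_eq_integral_integral {α β : Type*} [MeasurableSpace α] [MeasurableSpace β]
    {μ : Measure α} [SFinite μ] {κ : Kernel α β} [IsSFiniteKernel κ] {f : β → ℝ}
    (hf : Integrable f (κ ∘ₘ μ)) :
    ∫ y, f y ∂(κ ∘ₘ μ) = ∫ x, ∫ y, f y ∂κ x ∂μ := by
  rw [← Measure.snd_compProd] at hf ⊢
  rw [Measure.snd] at hf ⊢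
  rw [integral_map measurable_snd.aemeasurable hf.aestronglyMeasurable,
    Measure.integral_compProd (f := fun p : α × β => f p.2) (hf.comp_measurable measurable_snd)]

open ProbabilityTheory in
theorem integrable_integral_of_integrable_comp {α β : Type*} [MeasurableSpace α]
    [MeasurableSpace β] {μ : Measure α} [SFinite μ] {κ : Kernel α β} [IsSFiniteKernel κ]
    {f : β → ℝ} (hf : Integrable f (κ ∘ₘ μ)) : Integrable (fun x => ∫ y, f y ∂κ x) μ := by
  rw [Measure.comp_eq_comp_const_apply] at hf
  simpa using hf.integral_comp

theorem epos_coe (r : ℝ) : epos (r : EReal) = ENNReal.ofReal r := by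
  simp [epos]

theorem eint_coe {α : Type*} [MeasurableSpace α] {μ : Measure α} {f : α → ℝ}
    (hf : Integrable f μ) : eint μ (fun x => (f x : EReal)) = ((∫ x, f x ∂μ : ℝ) : EReal) := by
  have h₁ : ∫⁻ x, ENNReal.ofReal (f x) ∂μ ≠ ⊤ := hf.lintegral_lt_top.ne
  have h₂ : ∫⁻ x, ENNReal.ofReal (-f x) ∂μ ≠ ⊤ := hf.neg.lintegral_lt_top.ne
  simp only [eint, ← EReal.coe_neg, epos_coe]
  rw [integral_eq_lintegral_pos_part_sub_lintegral_neg_part hf, EReal.coe_sub,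
    EReal.coe_ennreal_toReal h₁, EReal.coe_ennreal_toReal h₂]

theorem exists_simpleFunc_edist_lt {X : Type*} [MetricSpace X] [CompactSpace X]
    [MeasurableSpace X] [BorelSpace X] [Nonempty X] {ε : ℝ≥0∞} (hε : 0 < ε) :
    ∃ s : SimpleFunc X X, ∀ x, edist (s x) x < ε := by
  obtain ⟨t, ht⟩ := isCompact_univ.elim_finite_subcover
    (fun k => Metric.eball (TopologicalSpace.denseSeq X k) ε) (fun _ => Metric.isOpen_eball)
    (fun x _ => by
      obtain ⟨_, ⟨k, rfl⟩, hk⟩ :=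
        EMetric.mem_closure_iff.1 (TopologicalSpace.denseRange_denseSeq X x) ε hε
      exact mem_iUnion.2 ⟨k, hk⟩)
  refine ⟨SimpleFunc.nearestPt (TopologicalSpace.denseSeq X) (t.sup id), fun x => ?_⟩
  obtain ⟨k, hk, hx⟩ := mem_iUnion₂.1 (ht (mem_univ x))
  refine (SimpleFunc.edist_nearestPt_le _ x (Finset.le_sup (f := id) hk)).trans_lt ?_
  rw [edist_comm]
  exact hx

/-- A bounded-above function can be nearly maximized along simple functions that are uniformly
close to the identity. -/
theorem exists_simpleFunc_edist_lt_sub_le {X : Type*} [MetricSpace X] [CompactSpace X]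
    [MeasurableSpace X] [BorelSpace X] [Nonempty X] {t : X → ℝ} (ht : BddAbove (range t))
    {ε : ℝ} (hε : 0 < ε) :
    ∃ r : SimpleFunc X X, ∀ x, dist (r x) x < ε ∧ t x - ε ≤ t (r x) := by
  obtain ⟨s, hs⟩ := exists_simpleFunc_edist_lt (X := X) (ε := ENNReal.ofReal (ε / 2))
    (by simpa using hε)
  have hs' (x : X) : dist (s x) x < ε / 2 := by
    have := hs x
    rwa [edist_dist, ENNReal.ofReal_lt_ofReal_iff (by positivity)] at this
  have hsel (y : X) : ∃ z, ∀ x, s x = y → s z = y ∧ t x - ε ≤ t z := by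
    by_cases hy : ∃ x, s x = y
    · obtain ⟨x₀, hx₀⟩ := hy
      obtain ⟨_, ⟨z, hz, rfl⟩, hlt⟩ := exists_lt_of_lt_csSup
        (s := t '' {x | s x = y}) ⟨_, x₀, hx₀, rfl⟩ (sub_lt_self _ hε)
      refine ⟨z, fun x hx => ⟨hz, ?_⟩⟩
      have := le_csSup (ht.mono (image_subset_range t {x | s x = y})) ⟨x, hx, rfl⟩
      linarith
    · exact ⟨y, fun x hx => (hy ⟨x, hx⟩).elim⟩
  choose φ hφ using hsel
  refine ⟨s.map φ, fun x => ⟨?_, (hφ (s x) x rfl).2⟩⟩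
  have h₁ := hs' (φ (s x))
  rw [(hφ (s x) x rfl).1] at h₁
  calc dist (φ (s x)) x ≤ dist (s x) (φ (s x)) + dist (s x) x := dist_triangle_left _ _ _
    _ < ε := by linarith [hs' x]

/-- For a convex weak*-compact gambling house with the disintegration (fiber)
property, the Legendre transform of its characteristic transfer at any `μ` is
`∫ T g dμ`; in particular every `μ` admits a target in `S`. -/
theorem houseOp_legendre_of_fiber
    {X Y : Type*} [MetricSpace X] [CompactSpace X] [MeasurableSpace X] [BorelSpace X]
    [MetricSpace Y] [CompactSpace Y] [MeasurableSpace Y] [BorelSpace Y]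
    (S : Set (ProbabilityMeasure X × ProbabilityMeasure Y))
    (hne : S.Nonempty) (hconv : PConvex S) (hcomp : IsCompact S)
    (hhouse : IsGamblingHouse S)
    (hfiber : ∀ (μ : ProbabilityMeasure X) (ν : ProbabilityMeasure Y),
      (μ, ν) ∈ S ↔ ∃ (π : ProbabilityMeasure (X × Y)) (κ : X → ProbabilityMeasure Y),
        (π : Measure (X × Y)).map Prod.fst = (μ : Measure X) ∧
        (π : Measure (X × Y)).map Prod.snd = (ν : Measure Y) ∧
        Measurable (fun x => (κ x : Measure Y)) ∧
        (∀ (A : Set X) (B : Set Y), MeasurableSet A → MeasurableSet B →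
          (π : Measure (X × Y)) (A ×ˢ B) = ∫⁻ x in A, (κ x : Measure Y) B ∂(μ : Measure X)) ∧
        (∀ᵐ x ∂(μ : Measure X), (diracP x, κ x) ∈ S)) :
    (∀ (μ : ProbabilityMeasure X) (g : C(Y, ℝ)),
      (⨆ ν ∈ {ν : ProbabilityMeasure Y | (μ, ν) ∈ S},
          (((∫ y, g y ∂(ν : Measure Y)) : ℝ) : EReal))
        = eint (μ : Measure X) (houseOp S g)) ∧
    (∀ μ : ProbabilityMeasure X, ∃ ν : ProbabilityMeasure Y, (μ, ν) ∈ S) := by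
  classical
  have hg_int (g : C(Y, ℝ)) (ν : Measure Y) [IsFiniteMeasure ν] : Integrable g ν :=
    g.continuous.integrable_of_hasCompactSupport (HasCompactSupport.of_compactSpace _)
  have hbound (g : C(Y, ℝ)) (ν : ProbabilityMeasure Y) :
      ‖∫ y, g y ∂(ν : Measure Y)‖ ≤ ‖g‖ := by
    simpa using norm_integral_le_of_norm_le_const (μ := (ν : Measure Y))
      (Eventually.of_forall g.norm_coe_le_norm)
  have hcontY (g : C(Y, ℝ)) :
      Continuous fun ν : ProbabilityMeasure Y => ∫ y, g y ∂(ν : Measure Y) :=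
    ProbabilityMeasure.continuous_integral_continuousMap g
  have hcontδ : Continuous (diracP : X → ProbabilityMeasure X) := continuous_diracProba
  have key (μ : ProbabilityMeasure X) (g : C(Y, ℝ)) : ∃ t : X → ℝ,
      (∀ x, houseOp S g x = t x) ∧ Integrable t (μ : Measure X) ∧
      (∀ x σ, (diracP x, σ) ∈ S → ∫ y, g y ∂(σ : Measure Y) ≤ t x) ∧
      ∃ ν, (μ, ν) ∈ S ∧ ∫ x, t x ∂(μ : Measure X) ≤ ∫ y, g y ∂(ν : Measure Y) := by
    have : Nonempty X := μ.nonempty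
    have hmax (x : X) : ∃ σ, (diracP x, σ) ∈ S ∧ ∀ σ', (diracP x, σ') ∈ S →
        ∫ y, g y ∂(σ' : Measure Y) ≤ ∫ y, g y ∂(σ : Measure Y) := by
      obtain ⟨σ₀, hσ₀⟩ := hhouse x
      obtain ⟨⟨_, σ⟩, ⟨hσ, rfl⟩, hm⟩ := (hcomp.inter_right
        ((isClosed_singleton (x := diracP x)).preimage continuous_fst)).exists_isMaxOn
        ⟨(diracP x, σ₀), hσ₀, rfl⟩ ((hcontY g).comp continuous_snd).continuousOn
      exact ⟨σ, hσ, fun σ' hσ' => hm ⟨hσ', rfl⟩⟩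
    choose σ hσS hσmax using hmax
    set t : X → ℝ := fun x => ∫ y, g y ∂(σ x : Measure Y)
    have hmeas : Measurable t := by
      refine measurable_of_Ici fun c => IsClosed.measurableSet ?_
      have hcl : IsClosed (Prod.fst '' (S ∩ {p | c ≤ ∫ y, g y ∂(p.2 : Measure Y)})) :=
        ((hcomp.inter_right (isClosed_le continuous_const
          ((hcontY g).comp continuous_snd))).image continuous_fst).isClosed
      convert hcl.preimage hcontδ using 1
      ext x
      constructor
      · exact fun hx => ⟨(diracP x, σ x), ⟨hσS x, hx⟩, rfl⟩
      · rintro ⟨⟨_, σ'⟩, ⟨h₁, h₂⟩, rfl⟩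
        exact le_trans h₂ (hσmax x σ' h₁)
    have htint (ρ : Measure X) [IsFiniteMeasure ρ] : Integrable t ρ :=
      .of_bound hmeas.aestronglyMeasurable ‖g‖ (Eventually.of_forall fun x => hbound g (σ x))
    refine ⟨t, fun x => le_antisymm ?_ ?_, htint _, hσmax, ?_⟩
    · exact iSup₂_le fun σ' h => EReal.coe_le_coe_iff.2 (hσmax x σ' h)
    · exact le_iSup₂_of_le (σ x) (hσS x) le_rfl
    have happrox (n : ℕ) := exists_simpleFunc_edist_lt_sub_le (t := t)
      ⟨‖g‖, by rintro _ ⟨x, rfl⟩; exact (le_abs_self _).trans (hbound g (σ x))⟩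
      (Nat.one_div_pos_of_nat (α := ℝ) (n := n))
    choose r hr using happrox
    let μ' (n : ℕ) : ProbabilityMeasure X := μ.map (r n).measurable.aemeasurable
    have hμ' : Tendsto μ' atTop (𝓝 μ) := by
      rw [ProbabilityMeasure.tendsto_iff_forall_integral_tendsto]
      intro f
      have hrw (n : ℕ) : ∫ x, f x ∂(μ' n : Measure X) = ∫ x, f (r n x) ∂(μ : Measure X) :=
        integral_map (r n).measurable.aemeasurable f.continuous.aestronglyMeasurable
      simp only [hrw]
      refine tendsto_integral_of_dominated_convergence (fun _ => ‖f‖)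
        (fun n => (f.continuous.measurable.comp (r n).measurable).aestronglyMeasurable)
        (integrable_const _) (fun n => Eventually.of_forall fun x => f.norm_coe_le_norm _)
        (Eventually.of_forall fun x => (f.continuous.tendsto x).comp ?_)
      rw [tendsto_iff_dist_tendsto_zero]
      exact squeeze_zero (fun _ => dist_nonneg) (fun n => (hr n x).1.le)
        tendsto_one_div_add_atTop_nhds_zero_nat
    have hstep (n : ℕ) : ∃ ν, (μ' n, ν) ∈ S ∧
        ∫ x, t x ∂(μ : Measure X) - 1 / ((n : ℝ) + 1) ≤ ∫ y, g y ∂(ν : Measure Y) := by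
      set σ₀ := σ (Classical.arbitrary X)
      let κ : X → ProbabilityMeasure Y := fun x => if x ∈ range (r n) then σ x else σ₀
      have hκ : Measurable (fun x => (κ x : Measure Y)) := by
        refine (measurable_const (a := (σ₀ : Measure Y))).measurable_of_countable_ne
          ((r n).finite_range.countable.mono fun x hx => ?_)
        by_contra h
        exact hx (by simp only [κ, if_neg h])
      let K : ProbabilityTheory.Kernel X Y := ⟨fun x => (κ x : Measure Y), hκ⟩
      have : ProbabilityTheory.IsMarkovKernel K := ⟨fun x => (κ x).2⟩
      have hae : ∀ᵐ x ∂(μ' n : Measure X), κ x = σ x := by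
        have hms : MeasurableSet (range (r n)) := (r n).finite_range.measurableSet
        have hmem : ∀ᵐ x ∂(μ' n : Measure X), x ∈ range (r n) :=
          (ae_map_iff (r n).measurable.aemeasurable hms).2
            (Eventually.of_forall fun x => ⟨x, rfl⟩)
        exact hmem.mono fun x hx => if_pos hx
      refine ⟨⟨(μ' n : Measure X).bind K, inferInstance⟩, ?_, ?_⟩
      · refine (hfiber _ _).2 ⟨⟨(μ' n : Measure X).compProd K, inferInstance⟩, κ, ?_, ?_, hκ, ?_, ?_⟩
        · exact Measure.fst_compProd _ _
        · exact Measure.snd_compProd _ _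
        · intro A B hA hB
          exact Measure.compProd_apply_prod hA hB
        · exact hae.mono fun x hx => hx ▸ hσS x
      · have h₁ : ∫ y, g y ∂((μ' n : Measure X).bind K) = ∫ x, t x ∂(μ' n : Measure X) := by
          rw [integral_comp_eq_integral_integral (hg_int g _)]
          refine integral_congr_ae (hae.mono fun x hx => ?_)
          change ∫ y, g y ∂(κ x : Measure Y) = t x
          rw [hx]
        have h₂ : ∫ x, t x ∂(μ' n : Measure X) = ∫ x, t (r n x) ∂(μ : Measure X) :=
          integral_map (r n).measurable.aemeasurable hmeas.aestronglyMeasurable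
        have h₃ : ∫ x, (t x - 1 / ((n : ℝ) + 1)) ∂(μ : Measure X) ≤
            ∫ x, t (r n x) ∂(μ : Measure X) :=
          integral_mono ((htint _).sub (integrable_const _))
            ((htint (μ' n : Measure X)).comp_measurable (r n).measurable) fun x => (hr n x).2
        rw [integral_sub (htint _) (integrable_const _)] at h₃
        simp only [integral_const, probReal_univ, one_smul] at h₃
        exact h₃.trans_eq (h₂.symm.trans h₁.symm)
    choose ν hνS hν using hstep
    obtain ⟨⟨a, b⟩, hab, hlim⟩ := hcomp.ultrafilter_le_nhds'
      ((hyperfilter ℕ).map fun n => (μ' n, ν n)) (mem_map.2 (univ_mem' hνS))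
    have hlim' : Tendsto (fun n => (μ' n, ν n)) (hyperfilter ℕ) (𝓝 (a, b)) := hlim
    have hat : (hyperfilter ℕ : Filter ℕ) ≤ atTop := Nat.hyperfilter_le_atTop
    obtain rfl : a = μ :=
      tendsto_nhds_unique ((continuous_fst.tendsto _).comp hlim') (hμ'.mono_left hat)
    refine ⟨b, hab, le_of_tendsto_of_tendsto ?_
      ((((hcontY g).comp continuous_snd).tendsto _).comp hlim') (Eventually.of_forall hν)⟩
    simpa using (tendsto_const_nhds.sub
      (tendsto_one_div_add_atTop_nhds_zero_nat (𝕜 := ℝ))).mono_left hat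
  refine ⟨fun μ g => ?_, fun μ => ?_⟩
  · obtain ⟨t, hTt, htint, hle, ν₀, hν₀, hge⟩ := key μ g
    rw [funext hTt, eint_coe htint]
    refine le_antisymm (iSup₂_le fun ν hν => EReal.coe_le_coe_iff.2 ?_)
      (le_iSup₂_of_le ν₀ hν₀ (EReal.coe_le_coe_iff.2 hge))
    obtain ⟨π, κ, -, h₂, hκ, hπ, hae⟩ := (hfiber μ ν).1 hν
    let K : ProbabilityTheory.Kernel X Y := ⟨fun x => (κ x : Measure Y), hκ⟩
    have : ProbabilityTheory.IsMarkovKernel K := ⟨fun x => (κ x).2⟩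
    have hνK : (ν : Measure Y) = (μ : Measure X).bind K := by
      ext B hB
      rw [← h₂, Measure.map_apply measurable_snd hB, Measure.bind_apply hB K.aemeasurable,
        ← univ_prod, hπ univ B .univ hB, Measure.restrict_univ]
      rfl
    have hgK : Integrable g ((μ : Measure X).bind K) := hg_int g _
    rw [hνK, integral_comp_eq_integral_integral hgK]
    exact integral_mono_ae (integrable_integral_of_integrable_comp hgK) htint (hae.mono fun x hx => hle x _ hx)
  · obtain ⟨-, -, -, -, ν, hν, -⟩ := key μ 0
    exact ⟨ν, hν⟩
end
end
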